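/- Let n ≥ 6 be an even integer and let K ⊂ ℝ² be an o-symmetric convex polygon with exactly n vertices and o in its interior that maximizes the volume product, i.e. V(L)·V(L*) ≤ V(K)·V(K*) for every o-symmetric convex polygon L with at most n vertices and o in its interior. Let y₁, y₂, y₃, y₄ be four consecutive vertices of K (in counterclockwise order), and suppose m ∈ ℝ² is the intersection point of the line through y₁, y₂ and the line through y₃, y₄. Then o, (y₂+y₃)/2 and m are collinear. -/

import Mathlib

/-!
The edge `y₂y₃` is tilted, in such a way that the area of the polar body does not decrease, and the
area of the polygon is compared before and after.

Let `a, b, c` be the vectors with `⟪·, a⟫ = 1`, `⟪·, b⟫ = 1`, `⟪·, c⟫ = 1` on the lines `y₁y₂`, `y₂y₃`,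
`y₃y₄`; they are consecutive vertices of `K*`. Replacing `b` by `b' = b + t (a - c)` for a small `t > 0`
moves a vertex of `K*` parallel to the diagonal `ac`, which keeps the area of the triangle `a b c`.
On the side of `K` the line of `y₂y₃` rotates about the point `p` of the edge where `⟪·, a⟫ = ⟪·, c⟫`;
`y₂` is replaced by a point `z₂` of the edge `y₁y₂`, and `y₃` by a point `z₃` of the segment `y₃m`.
Doing the same at `-y₂, -y₃` gives a symmetric polygon with no more vertices, whose polar body is at
least as large as `K*` (`EdgeConfig.volume_polar_le`). By maximality its area is at most that of `K`, so
the gained triangle `p y₃ z₃` is no larger than the lost triangle `z₂ p y₂` (`EdgeConfig.cross_le`).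

With `k₂ = 1 - ⟪y₂, c⟫`, `k₃ = 1 - ⟪y₃, a⟫`, `D = ⟪m, b⟫ - 1`, all positive, this comparison reads
`k₃² (D - t k₂) ≤ k₂² (D + t k₃)` (`EdgeConfig.ineq_of_small`). Letting `t → 0` gives `k₃ ≤ k₂`, and
the opposite tilt gives `k₂ ≤ k₃`. Hence `⟪y₂ + y₃, a - c⟫ = k₂ - k₃ = 0`; as also `⟪m, a - c⟫ = 0`, the
three points lie on the line through `0` orthogonal to `a - c`.

At least six vertices are needed only to know that `y₁ ≠ -y₃` and `y₄ ≠ -y₂`, that is, that the outer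
vertices survive the replacement (`card_le_four`).
-/

open MeasureTheory Real
open scoped Pointwise RealInnerProductSpace ENNReal

noncomputable section

abbrev E2 := EuclideanSpace ℝ (Fin 2)

/-- The polar body `K* = {y : ⟪x,y⟫ ≤ 1 for all x ∈ K}`. -/
def polarBody (K : Set E2) : Set E2 := {y | ∀ x ∈ K, ⟪x, y⟫ ≤ 1}

/-! ### Plane coordinates -/

/-- The determinant of `u, v`: twice the signed area of the triangle they span. -/
def cross (u v : E2) : ℝ := u 0 * v 1 - u 1 * v 0

lemma inner_coord (x y : E2) : ⟪x, y⟫ = x 0 * y 0 + x 1 * y 1 := by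
  simp [PiLp.inner_apply, Fin.sum_univ_two]; ring

lemma ext_coord {x y : E2} (h0 : x 0 = y 0) (h1 : x 1 = y 1) : x = y := by
  ext i; fin_cases i <;> assumption

/-- Points of the plane on a common level line of a nonzero functional are collinear. -/
lemma collinear_of_level {f x y z : E2} (hf : f ≠ 0) (hxy : ⟪x, f⟫ = ⟪y, f⟫)
    (hxz : ⟪x, f⟫ = ⟪z, f⟫) : Collinear ℝ {x, y, z} := by
  rw [collinear_iff_of_mem (p₀ := x) (by simp)]
  have hn : f 0 ^ 2 + f 1 ^ 2 ≠ 0 := by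
    intro h
    apply hf
    apply ext_coord
    · simp; nlinarith [mul_self_nonneg (f 0), mul_self_nonneg (f 1)]
    · simp; nlinarith [mul_self_nonneg (f 0), mul_self_nonneg (f 1)]
  have key : ∀ w : E2, ⟪x, f⟫ = ⟪w, f⟫ → ∃ r : ℝ, w = r • !₂[-f 1, f 0] +ᵥ x := by
    intro w hw
    rw [inner_coord, inner_coord] at hw
    refine ⟨((w 0 - x 0) * (-f 1) + (w 1 - x 1) * f 0) / (f 0 ^ 2 + f 1 ^ 2), ?_⟩
    apply ext_coord
    · simp
      field_simp
      linear_combination (-f 0) * hw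
    · simp
      field_simp
      linear_combination (-f 1) * hw
  refine ⟨!₂[-f 1, f 0], ?_⟩
  rintro w (rfl | rfl | rfl)
  · exact key _ rfl
  · exact key _ hxy
  · exact key _ hxz

/-- Barycentric coordinates with respect to the triangle `P Q R`, whose sides opposite to `P`, `Q`, `R`
lie on the lines `⟪·, f⟫ = 1`, `⟪·, g⟫ = 1`, `⟪·, h⟫ = 1`; each coordinate is read off from the
functional of the opposite side. -/
lemma barycentric {P Q R f g h : E2} (x : E2)
    (fP : ⟪P, f⟫ ≠ 1) (fQ : ⟪Q, f⟫ = 1) (fR : ⟪R, f⟫ = 1)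
    (gP : ⟪P, g⟫ = 1) (gQ : ⟪Q, g⟫ ≠ 1) (gR : ⟪R, g⟫ = 1)
    (hP : ⟪P, h⟫ = 1) (hQ : ⟪Q, h⟫ = 1) :
    ∃ i j k : ℝ, i + j + k = 1 ∧ x = i • P + j • Q + k • R ∧
      i * (⟪P, f⟫ - 1) = ⟪x, f⟫ - 1 ∧ j * (⟪Q, g⟫ - 1) = ⟪x, g⟫ - 1 ∧
      k * (⟪R, h⟫ - 1) = ⟪x, h⟫ - 1 := by
  have hD : cross (P - R) (Q - R) ≠ 0 := by
    intro h0
    have : (⟪P, f⟫ - 1) * (⟪Q, g⟫ - 1) = 0 := by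
      have e : (⟪P, f⟫ - ⟪R, f⟫) * (⟪Q, g⟫ - ⟪R, g⟫) - (⟪Q, f⟫ - ⟪R, f⟫) * (⟪P, g⟫ - ⟪R, g⟫)
          = cross f g * cross (P - R) (Q - R) := by
        simp only [inner_coord, cross, PiLp.sub_apply]; ring
      rw [h0, fR, gR, fQ] at e
      linarith
    rcases mul_eq_zero.1 this with h' | h'
    · exact fP (by linarith)
    · exact gQ (by linarith)
  obtain ⟨i, j, hx⟩ : ∃ i j : ℝ, x = i • P + j • Q + (1 - i - j) • R := by
    refine ⟨cross (x - R) (Q - R) / cross (P - R) (Q - R),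
      cross (P - R) (x - R) / cross (P - R) (Q - R), ?_⟩
    apply ext_coord
    · simp only [PiLp.add_apply, PiLp.smul_apply, smul_eq_mul]
      field_simp
      simp only [cross, PiLp.sub_apply]; ring
    · simp only [PiLp.add_apply, PiLp.smul_apply, smul_eq_mul]
      field_simp
      simp only [cross, PiLp.sub_apply]; ring
  refine ⟨i, j, 1 - i - j, by ring, hx, ?_, ?_, ?_⟩
  · rw [hx]; simp only [inner_add_left, real_inner_smul_left, fQ, fR]; ring
  · rw [hx]; simp only [inner_add_left, real_inner_smul_left, gP, gR]; ring
  · rw [hx]; simp only [inner_add_left, real_inner_smul_left, hP, hQ]; ring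

/-! ### Areas of triangles and of symmetric sets -/

/-- The triangle with vertices `0`, `(1, 0)`, `(0, 1)`, without its side on the first axis. -/
def stdTri : Set E2 := {x | 0 ≤ x 0 ∧ 0 < x 1 ∧ x 0 + x 1 ≤ 1}

/-- The triangle with vertices `R`, `R + u`, `R + v`, without its side from `R` to `R + u`.
Removing that side makes the disjointness of pieces glued along it literal rather than almost
everywhere. -/
def tri (R u v : E2) : Set E2 := {x | ∃ i j : ℝ, 0 ≤ i ∧ 0 < j ∧ i + j ≤ 1 ∧ x = R + i • u + j • v}

/-- The linear map sending the standard basis to `u, v`. -/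
def frameMap (u v : E2) : E2 →ₗ[ℝ] E2 :=
  Matrix.toLin (EuclideanSpace.basisFun (Fin 2) ℝ).toBasis
    (EuclideanSpace.basisFun (Fin 2) ℝ).toBasis !![u 0, v 0; u 1, v 1]

lemma frameMap_apply (u v x : E2) : frameMap u v x = x 0 • u + x 1 • v := by
  apply ext_coord <;>
  simp [frameMap, Matrix.toLin_apply, Matrix.mulVec, dotProduct, Fin.sum_univ_two] <;> ring

lemma frameMap_det (u v : E2) : LinearMap.det (frameMap u v) = cross u v := by
  simp [frameMap, LinearMap.det_toLin, Matrix.det_fin_two, cross]; ring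

lemma tri_eq_image (R u v : E2) : tri R u v = R +ᵥ (frameMap u v '' stdTri) := by
  ext x
  simp only [tri, Set.mem_ofPred_eq, Set.mem_vadd_set, Set.mem_image, stdTri, vadd_eq_add]
  constructor
  · rintro ⟨i, j, hi, hj, hij, rfl⟩
    refine ⟨_, ⟨!₂[i, j], by simpa using ⟨hi, hj, hij⟩, rfl⟩, ?_⟩
    rw [frameMap_apply]; simp [add_assoc]
  · rintro ⟨_, ⟨y, hy, rfl⟩, rfl⟩
    exact ⟨y 0, y 1, hy.1, hy.2.1, hy.2.2, by rw [frameMap_apply, add_assoc]⟩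

lemma volume_tri (R u v : E2) :
    volume (tri R u v) = ENNReal.ofReal |cross u v| * volume stdTri := by
  rw [tri_eq_image, measure_vadd, Measure.addHaar_image_linearMap, frameMap_det]

lemma stdTri_pos : volume stdTri ≠ 0 := by
  have ho : IsOpen {x : E2 | 0 < x 0 ∧ 0 < x 1 ∧ x 0 + x 1 < 1} := by
    have h0 : Continuous fun x : E2 => x 0 := by fun_prop
    have h1 : Continuous fun x : E2 => x 1 := by fun_prop
    exact (isOpen_lt continuous_const h0).inter
      ((isOpen_lt continuous_const h1).inter (isOpen_lt (h0.add h1) continuous_const))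
  have hp := ho.measure_pos volume ⟨!₂[1/3, 1/3], by norm_num⟩
  have hsub : {x : E2 | 0 < x 0 ∧ 0 < x 1 ∧ x 0 + x 1 < 1} ⊆ stdTri :=
    fun x hx => ⟨hx.1.le, hx.2.1, hx.2.2.le⟩
  exact (hp.trans_le (measure_mono hsub)).ne'

lemma stdTri_fin : volume stdTri ≠ ⊤ := by
  apply ((Metric.isBounded_closedBall (x := (0 : E2)) (r := 2)).subset ?_).measure_lt_top.ne
  intro x hx
  obtain ⟨h1, h2, h3⟩ := hx
  rw [mem_closedBall_zero_iff, EuclideanSpace.norm_eq, Fin.sum_univ_two]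
  rw [Real.sqrt_le_left (by norm_num)]
  simp only [Real.norm_eq_abs, sq_abs]
  nlinarith

lemma measurableSet_tri {R u v : E2} (h : cross u v ≠ 0) : MeasurableSet (tri R u v) := by
  have hs : MeasurableSet stdTri := by
    have h0 : Measurable fun x : E2 => x 0 := by fun_prop
    have h1 : Measurable fun x : E2 => x 1 := by fun_prop
    exact (measurableSet_le measurable_const h0).inter
      ((measurableSet_lt measurable_const h1).inter (measurableSet_le (h0.add h1) measurable_const))
  rw [tri_eq_image]
  apply MeasurableSet.const_vadd
  have hinj : Function.Injective (frameMap u v) := by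
    have hu : IsUnit (LinearMap.det (frameMap u v)) := by rw [frameMap_det]; exact h.isUnit
    exact ((LinearMap.isUnit_iff_isUnit_det _).2 hu |> (Module.End.isUnit_iff _).1).1
  exact hs.image_of_continuousOn_injOn
    (LinearMap.continuous_of_finiteDimensional _).continuousOn hinj.injOn

lemma volume_neg_set (B : Set E2) : volume (-B) = volume B := Measure.measure_neg volume B

/-- A symmetric set `L` containing a part `A` of the strip `|⟪·, f⟫| ≤ 1` and a set `B` beyond the strip
also contains `-B`, and the three pieces are disjoint. -/
lemma volume_lower {A B L : Set E2} {f : E2} (hBm : MeasurableSet B) (hAf : ∀ x ∈ A, |⟪x, f⟫| ≤ 1)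
    (hBf : ∀ x ∈ B, 1 < ⟪x, f⟫) (hA : A ⊆ L) (hB : B ⊆ L) (hL : ∀ x ∈ L, -x ∈ L) :
    volume A + 2 * volume B ≤ volume L := by
  have h1 : Disjoint A B := Set.disjoint_left.2 fun x hx hx' => by
    have := (abs_le.1 (hAf x hx)).2; have := hBf x hx'; linarith
  have h2 : Disjoint (A ∪ B) (-B) := Set.disjoint_left.2 fun x hx hx' => by
    have h := hBf (-x) hx'
    rw [inner_neg_left] at h
    rcases hx with hx | hx
    · have := (abs_le.1 (hAf x hx)).1; linarith
    · have := hBf x hx; linarith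
  calc volume A + 2 * volume B = volume (A ∪ B ∪ -B) := by
        rw [measure_union h2 hBm.neg, measure_union h1 hBm, volume_neg_set, add_assoc, two_mul]
    _ ≤ volume L := measure_mono (Set.union_subset (Set.union_subset hA hB) fun x hx => by
        simpa using hL _ (hB hx))

lemma volume_upper {A C K : Set E2} (h : K ⊆ A ∪ C ∪ -C) :
    volume K ≤ volume A + 2 * volume C := by
  calc volume K ≤ volume (A ∪ C ∪ -C) := measure_mono h
    _ ≤ volume A + volume C + volume (-C) :=
      (measure_union_le _ _).trans (add_le_add_left (measure_union_le _ _) _)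
    _ = _ := by rw [volume_neg_set, add_assoc, two_mul]

/-! ### Three consecutive edges -/

/-- The symmetric polygon `K` with vertex set `S`, three consecutive edges `y₁y₂`, `y₂y₃`, `y₃y₄` whose
lines are `⟪·, a⟫ = 1`, `⟪·, b⟫ = 1`, `⟪·, c⟫ = 1`, and the common point `m` of the outer two lines.
The last two fields say that `y₁ y₂ y₃` and `y₂ y₃ y₄` are not three vertices of a parallelogram
centred at `0`. -/
structure EdgeConfig (S : Finset E2) (K : Set E2) (y₁ y₂ y₃ y₄ m a b c : E2) : Prop where
  hull : K = convexHull ℝ (S : Set E2)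
  neg_mem : ∀ x ∈ S, -x ∈ S
  zero_mem : (0 : E2) ∈ interior K
  mem₁ : y₁ ∈ S
  mem₂ : y₂ ∈ S
  mem₃ : y₃ ∈ S
  mem₄ : y₄ ∈ S
  le_a : ∀ x ∈ K, ⟪x, a⟫ ≤ 1
  le_b : ∀ x ∈ K, ⟪x, b⟫ ≤ 1
  le_c : ∀ x ∈ K, ⟪x, c⟫ ≤ 1
  a₁ : ⟪y₁, a⟫ = 1
  a₂ : ⟪y₂, a⟫ = 1
  b₂ : ⟪y₂, b⟫ = 1
  b₃ : ⟪y₃, b⟫ = 1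
  c₃ : ⟪y₃, c⟫ = 1
  c₄ : ⟪y₄, c⟫ = 1
  a₃ : ⟪y₃, a⟫ < 1
  c₂ : ⟪y₂, c⟫ < 1
  b_lt : ∀ x ∈ S, x ≠ y₂ → x ≠ y₃ → ⟪x, b⟫ < 1
  ne₁₂ : y₁ ≠ y₂
  ne₁₃ : y₁ ≠ y₃
  ne₂₃ : y₂ ≠ y₃
  ne₂₄ : y₂ ≠ y₄
  ne₃₄ : y₃ ≠ y₄
  ma : ⟪m, a⟫ = 1
  mc : ⟪m, c⟫ = 1
  mb : 1 < ⟪m, b⟫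
  ne₁₃' : y₁ ≠ -y₃
  ne₄₂' : y₄ ≠ -y₂

namespace EdgeConfig

variable {S : Finset E2} {K : Set E2} {y₁ y₂ y₃ y₄ m a b c : E2}

/-- Reading the four vertices in the opposite order. -/
lemma symm (h : EdgeConfig S K y₁ y₂ y₃ y₄ m a b c) : EdgeConfig S K y₄ y₃ y₂ y₁ m c b a where
  hull := h.hull
  neg_mem := h.neg_mem
  zero_mem := h.zero_mem
  mem₁ := h.mem₄
  mem₂ := h.mem₃
  mem₃ := h.mem₂
  mem₄ := h.mem₁
  le_a := h.le_c
  le_b := h.le_b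
  le_c := h.le_a
  a₁ := h.c₄
  a₂ := h.c₃
  b₂ := h.b₃
  b₃ := h.b₂
  c₃ := h.a₂
  c₄ := h.a₁
  a₃ := h.c₂
  c₂ := h.a₃
  b_lt := fun x hx h2 h3 => h.b_lt x hx h3 h2
  ne₁₂ := h.ne₃₄.symm
  ne₁₃ := h.ne₂₄.symm
  ne₂₃ := h.ne₂₃.symm
  ne₂₄ := h.ne₁₃.symm
  ne₃₄ := h.ne₁₂.symm
  ma := h.mc
  mc := h.ma
  mb := h.mb
  ne₁₃' := h.ne₄₂'
  ne₄₂' := h.ne₁₃'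

lemma neg_mem_K (h : EdgeConfig S K y₁ y₂ y₃ y₄ m a b c) {x : E2} (hx : x ∈ K) : -x ∈ K := by
  have : K = -K := by
    conv_rhs => rw [h.hull, ← convexHull_neg]
    rw [h.hull]
    congr 1
    ext x
    simp only [Set.mem_neg, Finset.mem_coe]
    exact ⟨h.neg_mem x, fun hx => by simpa using h.neg_mem _ hx⟩
  rw [this]; simpa using hx

lemma subset_K (h : EdgeConfig S K y₁ y₂ y₃ y₄ m a b c) : (S : Set E2) ⊆ K := by
  rw [h.hull]; exact subset_convexHull _ _

lemma convex_K (h : EdgeConfig S K y₁ y₂ y₃ y₄ m a b c) : Convex ℝ K := by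
  rw [h.hull]; exact convex_convexHull _ _

/-- Beyond `y₂`, the line through `m` and `y₂` continues towards `y₁`. -/
lemma exists_ray (h : EdgeConfig S K y₁ y₂ y₃ y₄ m a b c) :
    ∃ l : ℝ, 0 < l ∧ y₁ = y₂ + l • (y₂ - m) := by
  have ha : a ≠ 0 := by rintro rfl; simpa using h.a₁
  have hcol := collinear_of_level (x := y₂) (y := y₁) (z := m) ha
    (by rw [h.a₁, h.a₂]) (by rw [h.ma, h.a₂])
  have hb1 := h.b_lt _ h.mem₁ h.ne₁₂ h.ne₁₃
  have hM := h.mb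
  obtain ⟨v, hv⟩ := (collinear_iff_of_mem (p₀ := y₂) (by simp)).1 hcol
  obtain ⟨r₁, hr₁⟩ := hv y₁ (by simp)
  obtain ⟨r₂, hr₂⟩ := hv m (by simp)
  rw [vadd_eq_add] at hr₁ hr₂
  have e₁ : ⟪y₁, b⟫ = 1 + r₁ * ⟪v, b⟫ := by
    rw [hr₁, inner_add_left, real_inner_smul_left, h.b₂]; ring
  have e₂ : ⟪m, b⟫ = 1 + r₂ * ⟪v, b⟫ := by
    rw [hr₂, inner_add_left, real_inner_smul_left, h.b₂]; ring
  rw [e₁] at hb1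
  rw [e₂] at hM
  have h1 : r₁ * ⟪v, b⟫ < 0 := by linarith
  have h2 : 0 < r₂ * ⟪v, b⟫ := by linarith
  have hr0 : r₂ ≠ 0 := by rintro rfl; simp at h2
  have hv0 : ⟪v, b⟫ ≠ 0 := by intro h0; simp [h0] at h2
  refine ⟨-(r₁ / r₂), ?_, ?_⟩
  · have : r₁ / r₂ = (r₁ * ⟪v, b⟫) / (r₂ * ⟪v, b⟫) := by field_simp
    rw [this, Left.neg_pos_iff]
    exact div_neg_of_neg_of_pos h1 h2
  · have e : y₂ - m = -(r₂ • v) := by rw [hr₂]; module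
    rw [e, smul_neg, neg_smul, neg_neg, smul_smul, div_mul_cancel₀ _ hr0, hr₁]; module

open Classical in
/-- The vertex set obtained from `S` by replacing `±y₂`, `±y₃` with `±z₂`, `±z₃`. -/
def newS (S : Finset E2) (y₂ y₃ z₂ z₃ : E2) : Finset E2 :=
  (S \ {y₂, -y₂, y₃, -y₃}) ∪ {z₂, -z₂, z₃, -z₃}

lemma mem_newS {y₂ y₃ z₂ z₃ x : E2} : x ∈ newS S y₂ y₃ z₂ z₃ ↔
    (x ∈ S ∧ x ≠ y₂ ∧ x ≠ -y₂ ∧ x ≠ y₃ ∧ x ≠ -y₃) ∨ x = z₂ ∨ x = -z₂ ∨ x = z₃ ∨ x = -z₃ := by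
  classical
  simp only [newS, Finset.mem_union, Finset.mem_sdiff, Finset.mem_insert, Finset.mem_singleton,
    not_or, ne_eq]

/-- The four points `±y₂`, `±y₃` are distinct, so the replacement does not increase the number of
vertices. -/
lemma card_newS (h : EdgeConfig S K y₁ y₂ y₃ y₄ m a b c) (z₂ z₃ : E2) :
    (newS S y₂ y₃ z₂ z₃).card ≤ S.card := by
  classical
  have h4 : ({y₂, -y₂, y₃, -y₃} : Finset E2).card = 4 := by
    have key : ∀ x y : E2, ⟪x, b⟫ = 1 → ⟪y, b⟫ = 1 → x ≠ -y := by
      rintro x y hx hy rfl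
      rw [inner_neg_left] at hx; linarith
    rw [Finset.card_insert_of_notMem, Finset.card_insert_of_notMem, Finset.card_insert_of_notMem,
      Finset.card_singleton]
    · simpa using key _ _ h.b₃ h.b₃
    · have := h.ne₂₃
      have := key _ _ h.b₃ h.b₂
      simp only [Finset.mem_insert, Finset.mem_singleton, neg_inj]
      rintro (e | e)
      · exact this e.symm
      · exact h.ne₂₃ e
    · simp only [Finset.mem_insert, Finset.mem_singleton]
      rintro (e | e | e)
      · exact key _ _ h.b₂ h.b₂ e
      · exact h.ne₂₃ e
      · exact key _ _ h.b₂ h.b₃ e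
  have hsub : ({y₂, -y₂, y₃, -y₃} : Finset E2) ⊆ S := by
    intro x hx
    simp only [Finset.mem_insert, Finset.mem_singleton] at hx
    rcases hx with rfl | rfl | rfl | rfl
    exacts [h.mem₂, h.neg_mem _ h.mem₂, h.mem₃, h.neg_mem _ h.mem₃]
  have h1 : (newS S y₂ y₃ z₂ z₃).card ≤
      (S \ {y₂, -y₂, y₃, -y₃}).card + ({z₂, -z₂, z₃, -z₃} : Finset E2).card := by
    rw [newS]; exact Finset.card_union_le _ _
  have h2 := Finset.card_sdiff_add_card_eq_card hsub
  have h3 : ({z₂, -z₂, z₃, -z₃} : Finset E2).card ≤ 4 := Finset.card_le_four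
  omega

end EdgeConfig

/-! ### Tilting the middle edge -/

/-- A tilt of the middle edge: its line `⟪·, b⟫ = 1` is turned about the point `p` of the edge into
`⟪·, b'⟫ = 1`, where `b' - b` is parallel to `a - c`. The tilted line cuts off `y₂`, meets the edge
`y₁y₂` in `z₂`, and meets the extension of `y₄y₃` beyond `y₃` in `z₃`; all vertices of `K` other than
`y₂` stay on its near side. -/
structure EdgeTilt (S : Finset E2) (K : Set E2) (y₂ y₃ y₄ m a b c b' p z₂ z₃ : E2) : Prop where
  y₂b' : 1 < ⟪y₂, b'⟫
  y₃b' : ⟪y₃, b'⟫ ≤ 1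
  y₃b'_neg : -1 ≤ ⟪y₃, b'⟫
  z₂K : z₂ ∈ K
  z₂a : ⟪z₂, a⟫ = 1
  z₂b' : ⟪z₂, b'⟫ = 1
  z₂b : ⟪z₂, b⟫ < 1
  pb : ⟪p, b⟫ = 1
  pb' : ⟪p, b'⟫ = 1
  pa : ⟪p, a⟫ < 1
  z₃b' : ⟪z₃, b'⟫ = 1
  z₃b : 1 < ⟪z₃, b⟫
  z₃m : z₃ ∈ segment ℝ y₃ m
  pz : p ∈ segment ℝ z₂ z₃
  y₃z : y₃ ∈ segment ℝ y₄ z₃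
  b'_le : ∀ x ∈ S, x ≠ y₂ → x ≠ -y₂ → x ≠ y₃ → x ≠ -y₃ → ⟪x, b'⟫ ≤ 1
  b'_eq : ∃ t : ℝ, b' = b + t • (a - c)

/-- A linear inequality on a set persists on its convex hull. -/
lemma polarBody_hull {s : Set E2} {y : E2} (hy : ∀ x ∈ s, ⟪x, y⟫ ≤ 1) :
    ∀ x ∈ convexHull ℝ s, ⟪x, y⟫ ≤ 1 := by
  have hc : Convex ℝ {x : E2 | ⟪x, y⟫ ≤ 1} := by
    intro u hu v hv α β hα hβ hαβ
    have hu' : ⟪u, y⟫ ≤ 1 := hu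
    have hv' : ⟪v, y⟫ ≤ 1 := hv
    show ⟪α • u + β • v, y⟫ ≤ 1
    rw [inner_add_left, real_inner_smul_left, real_inner_smul_left]
    nlinarith
  exact fun x hx => convexHull_min (t := {x : E2 | ⟪x, y⟫ ≤ 1}) hy hc hx

lemma polarBody_convex (L : Set E2) : Convex ℝ (polarBody L) := by
  intro u hu v hv α β hα hβ hαβ x hx
  have hu' : ⟪x, u⟫ ≤ 1 := hu x hx
  have hv' : ⟪x, v⟫ ≤ 1 := hv x hx
  rw [inner_add_right, real_inner_smul_right, real_inner_smul_right]
  nlinarith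

lemma tri_subset {L : Set E2} (hL : Convex ℝ L) {P Q R : E2} (hP : P ∈ L) (hQ : Q ∈ L) (hR : R ∈ L) :
    tri R (Q - R) (P - R) ⊆ L := by
  rintro x ⟨i, j, hi, hj, hij, rfl⟩
  have e : R + i • (Q - R) + j • (P - R) = (1 - i - j) • R + i • Q + j • P := by module
  rw [e]
  have := hL.sum_mem (t := Finset.univ) (w := ![1 - i - j, i, j]) (z := ![R, Q, P])
    (by intro k _; fin_cases k <;> simp <;> linarith)
    (by simp [Fin.sum_univ_three]; ring) (by intro k _; fin_cases k <;> simpa)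
  simpa [Fin.sum_univ_three] using this

lemma mem_tri {P Q R x : E2} {i j k : ℝ} (hi : 0 < i) (hj : 0 ≤ j) (hk : 0 ≤ k)
    (hs : i + j + k = 1) (hx : x = i • P + j • Q + k • R) : x ∈ tri R (Q - R) (P - R) := by
  refine ⟨j, i, hj, hi, by linarith, ?_⟩
  obtain rfl : k = 1 - i - j := by linarith
  rw [hx]; module

namespace EdgeConfig
variable {S : Finset E2} {K : Set E2} {y₁ y₂ y₃ y₄ m a b c b' p z₂ z₃ : E2}

lemma neg_mem_newS (h : EdgeConfig S K y₁ y₂ y₃ y₄ m a b c) :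
    ∀ x ∈ newS S y₂ y₃ z₂ z₃, -x ∈ newS S y₂ y₃ z₂ z₃ := by
  intro x hx
  rw [mem_newS] at hx ⊢
  rcases hx with ⟨hx, h1, h2, h3, h4⟩ | rfl | rfl | rfl | rfl
  · left
    refine ⟨h.neg_mem _ hx, ?_, ?_, ?_, ?_⟩
    · rwa [ne_eq, neg_eq_iff_eq_neg]
    · rwa [ne_eq, neg_inj]
    · rwa [ne_eq, neg_eq_iff_eq_neg]
    · rwa [ne_eq, neg_inj]
  all_goals simp

lemma neg_hull {T : Finset E2} (hT : ∀ x ∈ T, -x ∈ T) :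
    convexHull ℝ (T : Set E2) = -convexHull ℝ (T : Set E2) := by
  rw [← convexHull_neg]
  congr 1
  ext x
  simp only [Set.mem_neg, Finset.mem_coe]
  exact ⟨hT x, fun hx => by simpa using hT _ hx⟩

/-- The part of `K` beyond the tilted line is contained in the triangle `y₂ p z₂`: in barycentric
coordinates the coefficients of `p` and `z₂` are nonnegative on all of `K`. -/
lemma coords (h : EdgeConfig S K y₁ y₂ y₃ y₄ m a b c)
    (ht : EdgeTilt S K y₂ y₃ y₄ m a b c b' p z₂ z₃) {x : E2} (hx : x ∈ K) :
    ∃ i j k : ℝ, i + j + k = 1 ∧ x = i • y₂ + j • p + k • z₂ ∧ 0 ≤ j ∧ 0 ≤ k ∧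
      i * (⟪y₂, b'⟫ - 1) = ⟪x, b'⟫ - 1 := by
  obtain ⟨i, j, k, hs, hx', hi, hj, hk⟩ := barycentric (P := y₂) (Q := p) (R := z₂) (f := b')
    (g := a) (h := b) x ht.y₂b'.ne' ht.pb' ht.z₂b' h.a₂ ht.pa.ne ht.z₂a h.b₂ ht.pb
  refine ⟨i, j, k, hs, hx', ?_, ?_, hi⟩
  · have := h.le_a x hx
    have := ht.pa
    by_contra! hneg
    nlinarith
  · have := h.le_b x hx
    have := ht.z₂b
    by_contra! hneg
    nlinarith

lemma z₂_mem (z₂ z₃ : E2) : z₂ ∈ convexHull ℝ (newS S y₂ y₃ z₂ z₃ : Set E2) :=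
  subset_convexHull _ _ (by simp [mem_newS])

lemma z₃_mem (z₂ z₃ : E2) : z₃ ∈ convexHull ℝ (newS S y₂ y₃ z₂ z₃ : Set E2) :=
  subset_convexHull _ _ (by simp [mem_newS])

lemma p_mem (ht : EdgeTilt S K y₂ y₃ y₄ m a b c b' p z₂ z₃) :
    p ∈ convexHull ℝ (newS S y₂ y₃ z₂ z₃ : Set E2) :=
  (convex_convexHull ℝ _).segment_subset (z₂_mem z₂ z₃) (z₃_mem z₂ z₃) ht.pz

lemma y₃_mem (h : EdgeConfig S K y₁ y₂ y₃ y₄ m a b c)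
    (ht : EdgeTilt S K y₂ y₃ y₄ m a b c b' p z₂ z₃) :
    y₃ ∈ convexHull ℝ (newS S y₂ y₃ z₂ z₃ : Set E2) := by
  refine (convex_convexHull ℝ _).segment_subset ?_ (z₃_mem z₂ z₃) ht.y₃z
  apply subset_convexHull
  rw [Finset.mem_coe, mem_newS]
  refine Or.inl ⟨h.mem₄, h.ne₂₄.symm, h.ne₄₂', h.ne₃₄.symm, ?_⟩
  intro e
  have h1 := h.c₄
  rw [e, inner_neg_left, h.c₃] at h1
  norm_num at h1

/-- The new polygon contains the part of `K` between the tilted line and its reflection in `0`. A segment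
from `y₂` to a point of the hull of the remaining vertices crosses the tilted line at a point of `K`,
hence, by `coords`, between `p` and `z₂`. -/
lemma slab_subset (h : EdgeConfig S K y₁ y₂ y₃ y₄ m a b c)
    (ht : EdgeTilt S K y₂ y₃ y₄ m a b c b' p z₂ z₃) {x : E2} (hx : x ∈ K) (hxb : |⟪x, b'⟫| ≤ 1) :
    x ∈ convexHull ℝ (newS S y₂ y₃ z₂ z₃ : Set E2) := by
  classical
  set L := convexHull ℝ (newS S y₂ y₃ z₂ z₃ : Set E2) with hL
  have hLc : Convex ℝ L := convex_convexHull ℝ _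
  have hLneg : ∀ x ∈ L, -x ∈ L := by
    intro x hx
    rw [hL, neg_hull h.neg_mem_newS]; simpa using hx
  set R := convexHull ℝ ((S \ {y₂, -y₂} : Finset E2) : Set E2) with hR
  have hRc : Convex ℝ R := convex_convexHull ℝ _
  have hRK : R ⊆ K := by
    rw [h.hull]; exact convexHull_mono (by simp)
  have hRL : R ⊆ L := by
    apply convexHull_min _ hLc
    intro x hx
    simp only [Finset.coe_sdiff, Finset.coe_insert, Finset.coe_singleton, Set.mem_sdiff,
      Finset.mem_coe, Set.mem_insert_iff, Set.mem_singleton_iff, not_or] at hx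
    by_cases h3 : x = y₃
    · rw [h3]; exact h.y₃_mem ht
    by_cases h4 : x = -y₃
    · rw [h4]; exact hLneg _ (h.y₃_mem ht)
    apply subset_convexHull
    rw [Finset.mem_coe, mem_newS]
    exact Or.inl ⟨hx.1, hx.2.1, hx.2.2, h3, h4⟩
  have hRneg : ∀ x ∈ R, -x ∈ R := by
    intro x hx
    rw [hR, neg_hull, Set.mem_neg, neg_neg]
    · exact hx
    · intro z hz
      simp only [Finset.mem_sdiff, Finset.mem_insert, Finset.mem_singleton, not_or] at hz ⊢
      refine ⟨h.neg_mem _ hz.1, ?_, ?_⟩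
      · rw [neg_eq_iff_eq_neg]; exact hz.2.2
      · rw [neg_inj]; exact hz.2.1
  have hRb : ∀ x ∈ R, ⟪x, b'⟫ ≤ 1 := by
    apply polarBody_hull
    intro x hx
    simp only [Finset.coe_sdiff, Finset.coe_insert, Finset.coe_singleton, Set.mem_sdiff,
      Finset.mem_coe, Set.mem_insert_iff, Set.mem_singleton_iff, not_or] at hx
    by_cases h3 : x = y₃
    · rw [h3]; exact ht.y₃b'
    by_cases h4 : x = -y₃
    · rw [h4, inner_neg_left]; linarith [ht.y₃b'_neg]
    exact ht.b'_le x hx.1 hx.2.1 hx.2.2 h3 h4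
  have hy3R : y₃ ∈ R := by
    apply subset_convexHull
    simp only [Finset.coe_sdiff, Finset.coe_insert, Finset.coe_singleton, Set.mem_sdiff,
      Finset.mem_coe, Set.mem_insert_iff, Set.mem_singleton_iff, not_or]
    refine ⟨h.mem₃, h.ne₂₃.symm, ?_⟩
    intro e
    have h1 := h.b₃
    rw [e, inner_neg_left, h.b₂] at h1
    norm_num at h1
  have h0R : (0 : E2) ∈ R := by
    have := hRc hy3R (hRneg _ hy3R) (by norm_num : (0:ℝ) ≤ 1/2) (by norm_num : (0:ℝ) ≤ 1/2)
      (by norm_num)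
    simpa using this
  -- every point of `K` is a combination of `y₂`, `-y₂` and a point of `R`
  obtain ⟨α, β, γ, l, hα, hβ, hγ, hs, hl, hxe⟩ : ∃ (α β γ : ℝ) (l : E2), 0 ≤ α ∧ 0 ≤ β ∧ 0 ≤ γ ∧
      α + β + γ = 1 ∧ l ∈ R ∧ x = (α - β) • y₂ + γ • l := by
    have hx1 : x ∈ convexHull ℝ (insert y₂ (insert (-y₂) ((S \ {y₂, -y₂} : Finset E2) : Set E2))) := by
      rw [h.hull] at hx
      refine convexHull_mono ?_ hx
      intro z hz
      simp only [Finset.coe_sdiff, Finset.coe_insert, Finset.coe_singleton, Set.mem_sdiff,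
        Finset.mem_coe, Set.mem_insert_iff, Set.mem_singleton_iff, not_or] at hz ⊢
      tauto
    have hne : ((S \ {y₂, -y₂} : Finset E2) : Set E2).Nonempty :=
      convexHull_nonempty_iff.1 ⟨_, h0R⟩
    rw [convexHull_insert (Set.insert_nonempty _ _), convexHull_insert hne] at hx1
    simp only [convexJoin_singleton_left, Set.mem_iUnion] at hx1
    obtain ⟨w, ⟨l, hl, hw⟩, hx2⟩ := hx1
    obtain ⟨i, j, hi, hj, hij, rfl⟩ := hw
    obtain ⟨i', j', hi', hj', hsum, rfl⟩ := hx2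
    refine ⟨i', j' * i, j' * j, l, hi', by positivity, by positivity, ?_, hl, by module⟩
    rw [add_assoc, ← mul_add, hij, mul_one, hsum]
  -- points `δ y₂ + γ l` with `δ ≥ 0` on the near side of the tilted line lie in `L`
  have main : ∀ (δ γ : ℝ) (l : E2), 0 ≤ δ → 0 ≤ γ → δ + γ ≤ 1 → l ∈ R →
      ⟪δ • y₂ + γ • l, b'⟫ ≤ 1 → δ • y₂ + γ • l ∈ L := by
    intro δ γ l hδ hγ hs hl hb
    have hN := ht.y₂b'
    rcases eq_or_lt_of_le hδ with rfl | hδ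
    · have := hLc (hRL hl) (hRL h0R) hγ (by linarith : (0:ℝ) ≤ 1 - γ) (by ring)
      simpa using this
    have hδ1 : δ < 1 := by
      by_contra! hcon
      obtain rfl : γ = 0 := by linarith
      rw [inner_add_left, real_inner_smul_left] at hb
      simp at hb
      nlinarith
    obtain ⟨l', hl', hle⟩ : ∃ l' ∈ R, γ • l = (1 - δ) • l' := by
      have h1 : 0 < 1 - δ := by linarith
      refine ⟨(γ / (1 - δ)) • l, ?_, ?_⟩
      · have := hRc hl h0R (by positivity : 0 ≤ γ / (1 - δ))
          (sub_nonneg.2 ((div_le_one h1).2 (by linarith : γ ≤ 1 - δ))) (by ring)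
        simpa using this
      · rw [smul_smul]; congr 1; field_simp
    rw [hle] at hb ⊢
    rw [inner_add_left, real_inner_smul_left, real_inner_smul_left] at hb
    have hh := hRb l' hl'
    set N := ⟪y₂, b'⟫
    set H := ⟪l', b'⟫ with hH
    have hNH : 0 < N - H := by linarith
    set τ := (1 - H) / (N - H) with hτ
    have hτe : τ * (N - H) = 1 - H := by rw [hτ]; field_simp
    have hδτ : δ ≤ τ := by rw [hτ, le_div_iff₀ hNH]; nlinarith
    have hτ1 : τ ≤ 1 := by rw [hτ, div_le_one hNH]; linarith
    have hτ0 : 0 < τ := by linarith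
    have hqK : τ • y₂ + (1 - τ) • l' ∈ K :=
      h.convex_K (h.subset_K h.mem₂) (hRK hl') hτ0.le (by linarith) (by ring)
    have hqb : ⟪τ • y₂ + (1 - τ) • l', b'⟫ = 1 := by
      rw [inner_add_left, real_inner_smul_left, real_inner_smul_left]
      linear_combination hτe
    have hqL : τ • y₂ + (1 - τ) • l' ∈ L := by
      obtain ⟨i, j, k, hs, hx', hj, hk, hi⟩ := h.coords ht hqK
      rw [hqb, sub_self] at hi
      have hi0 : i = 0 := by
        rcases mul_eq_zero.1 hi with h' | h'
        · exact h'
        · linarith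
      rw [hx', hi0, zero_smul, zero_add]
      exact hLc (p_mem ht) (z₂_mem z₂ z₃) hj hk (by linarith)
    have := hLc (hRL hl') hqL (sub_nonneg.2 ((div_le_one hτ0).2 hδτ)) (by positivity : 0 ≤ δ / τ)
      (by ring)
    convert this using 1
    have e : δ = δ / τ * τ := by field_simp
    rw [smul_add, smul_smul, smul_smul, ← e, mul_sub, ← e, mul_one]
    module
  rw [hxe] at hxb ⊢
  rw [abs_le] at hxb
  rcases le_total β α with hle | hle
  · exact main _ _ _ (by linarith) hγ (by linarith) hl hxb.2
  · have e : (α - β) • y₂ + γ • l = -((β - α) • y₂ + γ • (-l)) := by module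
    rw [e] at hxb ⊢
    refine hLneg _ (main _ _ _ (by linarith) hγ (by linarith) (hRneg _ hl) ?_)
    rw [inner_neg_left] at hxb
    linarith [hxb.1]

end EdgeConfig

/-! ### Comparison of areas -/

lemma volume_polarBody_pos {K : Set E2} (hK : Bornology.IsBounded K) :
    volume (polarBody K) ≠ 0 := by
  obtain ⟨r, hr0, hr⟩ := hK.subset_closedBall_lt 0 (0 : E2)
  have hsub : Metric.ball (0 : E2) (1 / r) ⊆ polarBody K := by
    intro y hy x hx
    have h1 : ‖y‖ < 1 / r := by simpa using hy
    have h2 : ‖x‖ ≤ r := by simpa using hr hx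
    calc ⟪x, y⟫ ≤ ‖x‖ * ‖y‖ := real_inner_le_norm x y
      _ ≤ r * (1 / r) := by gcongr
      _ = 1 := by field_simp
  exact ((Metric.measure_ball_pos volume (0 : E2) (by positivity : 0 < 1 / r)).trans_le
    (measure_mono hsub)).ne'

lemma volume_polarBody_lt_top {K : Set E2} (hK : (0 : E2) ∈ interior K) :
    volume (polarBody K) ≠ ⊤ := by
  rw [mem_interior_iff_mem_nhds, Metric.nhds_basis_closedBall.mem_iff] at hK
  obtain ⟨r, hr0, hr⟩ := hK
  apply ((Metric.isBounded_closedBall (x := (0 : E2)) (r := 1 / r)).subset ?_).measure_lt_top.ne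
  intro y hy
  rw [mem_closedBall_zero_iff]
  rcases eq_or_ne y 0 with rfl | hne
  · simp; positivity
  have hn : 0 < ‖y‖ := norm_pos_iff.2 hne
  have h1 : (r / ‖y‖) • y ∈ K := by
    apply hr
    rw [mem_closedBall_zero_iff, norm_smul, Real.norm_of_nonneg (by positivity)]
    field_simp; exact le_rfl
  have h2 := hy _ h1
  rw [real_inner_smul_left, real_inner_self_eq_norm_sq] at h2
  rw [le_div_iff₀ hr0]
  calc ‖y‖ * r = r / ‖y‖ * ‖y‖ ^ 2 := by field_simp
    _ ≤ 1 := h2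

namespace EdgeConfig
variable {S : Finset E2} {K : Set E2} {y₁ y₂ y₃ y₄ m a b c b' p z₂ z₃ : E2}

/-- Polar points in the strip `|⟪m, ·⟫| ≤ 1` stay polar, because `z₃` lies between `y₃` and `m`. -/
lemma mem_polar_new (h : EdgeConfig S K y₁ y₂ y₃ y₄ m a b c)
    (ht : EdgeTilt S K y₂ y₃ y₄ m a b c b' p z₂ z₃) {y : E2} (hy : y ∈ polarBody K)
    (hm : |⟪m, y⟫| ≤ 1) : y ∈ polarBody (convexHull ℝ (newS S y₂ y₃ z₂ z₃ : Set E2)) := by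
  rw [abs_le] at hm
  have h3 := hy _ (h.subset_K h.mem₃)
  have h3' := hy _ (h.neg_mem_K (h.subset_K h.mem₃))
  have h2' := hy _ (h.neg_mem_K ht.z₂K)
  rw [inner_neg_left] at h3' h2'
  obtain ⟨i, j, hi, hj, hij, hz⟩ := ht.z₃m
  have hz3 : ⟪z₃, y⟫ = i * ⟪y₃, y⟫ + j * ⟪m, y⟫ := by
    rw [← hz, inner_add_left, real_inner_smul_left, real_inner_smul_left]
  apply polarBody_hull
  intro x hx
  rw [Finset.mem_coe, mem_newS] at hx
  rcases hx with hx | rfl | rfl | rfl | rfl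
  · exact hy _ (h.subset_K hx.1)
  · exact hy _ ht.z₂K
  · rw [inner_neg_left]; linarith
  · rw [hz3]; nlinarith
  · rw [inner_neg_left, hz3]; nlinarith

lemma b'_mem_polar_new (ht : EdgeTilt S K y₂ y₃ y₄ m a b c b' p z₂ z₃) :
    b' ∈ polarBody (convexHull ℝ (newS S y₂ y₃ z₂ z₃ : Set E2)) := by
  apply polarBody_hull
  intro x hx
  rw [Finset.mem_coe, mem_newS] at hx
  rcases hx with ⟨hx, h1, h2, h3, h4⟩ | rfl | rfl | rfl | rfl
  · exact ht.b'_le _ hx h1 h2 h3 h4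
  · exact ht.z₂b'.le
  · rw [inner_neg_left, ht.z₂b']; norm_num
  · exact ht.z₃b'.le
  · have hz := ht.z₃b'
    rw [inner_neg_left, hz]; norm_num

/-- Tilting the edge does not decrease the area of the polar body: beyond the line `⟪m, ·⟫ = 1`, the
polar of `K` is the triangle `a b c`, and the new polar body contains the triangle `a b' c`, which has
the same base `ac` and the same height. -/
lemma volume_polar_le (h : EdgeConfig S K y₁ y₂ y₃ y₄ m a b c)
    (ht : EdgeTilt S K y₂ y₃ y₄ m a b c b' p z₂ z₃) :
    volume (polarBody K) ≤
      volume (polarBody (convexHull ℝ (newS S y₂ y₃ z₂ z₃ : Set E2))) := by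
  set L := convexHull ℝ (newS S y₂ y₃ z₂ z₃ : Set E2) with hL
  have hsymL : ∀ y ∈ polarBody L, -y ∈ polarBody L := by
    intro y hy x hx
    have hx' : -x ∈ L := by rw [hL, neg_hull h.neg_mem_newS]; simpa using hx
    have := hy _ hx'
    rwa [inner_neg_left, ← inner_neg_right] at this
  have hsymK : ∀ y ∈ polarBody K, -y ∈ polarBody K := by
    intro y hy x hx
    have := hy _ (h.neg_mem_K hx)
    rwa [inner_neg_left, ← inner_neg_right] at this
  have hup : volume (polarBody K) ≤ volume (polarBody K ∩ {y | |⟪y, m⟫| ≤ 1}) +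
      2 * volume (tri c (a - c) (b - c)) := by
    apply volume_upper
    have key : ∀ y ∈ polarBody K, 1 < ⟪y, m⟫ → y ∈ tri c (a - c) (b - c) := by
      intro y hy hym
      have h1 := h.a₃
      have h2 := h.c₂
      have h3 := h.mb
      rw [real_inner_comm] at h1 h2 h3
      obtain ⟨i, j, k, hs, hx', hi, hj, hk⟩ := barycentric (P := b) (Q := a) (R := c) (f := m)
        (g := y₃) (h := y₂) y h3.ne' (by rw [real_inner_comm, h.ma])
        (by rw [real_inner_comm, h.mc]) (by rw [real_inner_comm, h.b₃]) h1.ne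
        (by rw [real_inner_comm, h.c₃]) (by rw [real_inner_comm, h.b₂])
        (by rw [real_inner_comm, h.a₂])
      have h4 := hy _ (h.subset_K h.mem₂)
      have h5 := hy _ (h.subset_K h.mem₃)
      rw [real_inner_comm] at h4 h5
      refine mem_tri ?_ ?_ ?_ hs hx'
      · by_contra! hneg
        nlinarith
      · by_contra! hneg
        nlinarith
      · by_contra! hneg
        nlinarith
    intro y hy
    by_cases h1 : 1 < ⟪y, m⟫
    · exact Or.inl (Or.inr (key y hy h1))
    by_cases h2 : 1 < ⟪-y, m⟫
    · exact Or.inr (key _ (hsymK _ hy) h2)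
    · rw [inner_neg_left] at h2
      have hab : |⟪y, m⟫| ≤ 1 := abs_le.2 ⟨by linarith, by linarith⟩
      exact Or.inl (Or.inl ⟨hy, hab⟩)
  have hAL : polarBody K ∩ {y | |⟪y, m⟫| ≤ 1} ⊆ polarBody L := by
    rintro y ⟨hy, hym⟩
    exact h.mem_polar_new ht hy (by rw [real_inner_comm]; exact hym)
  -- the apex moves parallel to the base, so the area is unchanged
  obtain ⟨t, hb'⟩ := ht.b'_eq
  have hcr : cross (a - c) (b' - c) = cross (a - c) (b - c) := by
    rw [hb']; simp only [cross, PiLp.sub_apply, PiLp.add_apply, PiLp.smul_apply, smul_eq_mul]; ring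
  have hvol : volume (tri c (a - c) (b - c)) = volume (tri c (a - c) (b' - c)) := by
    rw [volume_tri, volume_tri, hcr]
  by_cases h0 : cross (a - c) (b' - c) = 0
  · rw [hvol, volume_tri c, h0] at hup
    simp only [abs_zero, ENNReal.ofReal_zero, zero_mul, mul_zero, add_zero] at hup
    exact hup.trans (measure_mono hAL)
  rw [hvol] at hup
  refine hup.trans (volume_lower (f := m) (measurableSet_tri h0) (fun y hy => hy.2) ?_ hAL ?_ hsymL)
  · rintro y ⟨i, j, hi, hj, hij, rfl⟩
    have h1 := h.mb
    rw [hb']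
    simp only [inner_add_left, inner_sub_left, real_inner_smul_left]
    rw [real_inner_comm m a, real_inner_comm m b, real_inner_comm m c, h.ma, h.mc]
    nlinarith
  · refine tri_subset (polarBody_convex L) (b'_mem_polar_new ht) (h.mem_polar_new ht h.le_a ?_)
      (h.mem_polar_new ht h.le_c ?_)
    · rw [h.ma]; norm_num
    · rw [h.mc]; norm_num

/-- For a maximizer, the area gained by a tilt (triangle `p y₃ z₃`) is at most the area lost (triangle
`z₂ p y₂`), since the area of the polar body does not decrease. -/
lemma cross_le (h : EdgeConfig S K y₁ y₂ y₃ y₄ m a b c)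
    (ht : EdgeTilt S K y₂ y₃ y₄ m a b c b' p z₂ z₃)
    (hmax : ∀ (T : Finset E2) (L : Set E2), T.card ≤ S.card →
      L = convexHull ℝ (T : Set E2) → L = -L → (0 : E2) ∈ interior L →
      volume L * volume (polarBody L) ≤ volume K * volume (polarBody K)) :
    |cross (y₃ - p) (z₃ - p)| ≤ |cross (p - z₂) (y₂ - z₂)| := by
  by_cases hc0 : cross (y₃ - p) (z₃ - p) = 0
  · rw [hc0, abs_zero]; exact abs_nonneg _
  have hKcomp : IsCompact K := by rw [h.hull]; exact S.finite_toSet.isCompact_convexHull ℝ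
  have hpol := h.volume_polar_le ht
  set L := convexHull ℝ (newS S y₂ y₃ z₂ z₃ : Set E2) with hL
  have hLsym : L = -L := neg_hull h.neg_mem_newS
  have hLneg : ∀ x ∈ L, -x ∈ L := by
    intro x hx
    rw [hLsym]; simpa using hx
  have hLint : (0 : E2) ∈ interior L := by
    refine mem_interior.2 ⟨interior K ∩ {x | |⟪x, b'⟫| < 1}, ?_, ?_, h.zero_mem, ?_⟩
    · rintro x ⟨hx, hxb⟩
      exact h.slab_subset ht (interior_subset hx) (le_of_lt hxb)
    · have hcont : Continuous fun x : E2 => |⟪x, b'⟫| := by fun_prop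
      exact isOpen_interior.inter (isOpen_lt hcont continuous_const)
    · show |⟪(0 : E2), b'⟫| < 1
      simp
  have hmx := hmax _ L (h.card_newS z₂ z₃) hL hLsym hLint
  have hLK : volume L ≤ volume K := by
    have h1 : volume L * volume (polarBody K) ≤ volume K * volume (polarBody K) :=
      (mul_le_mul_right hpol _).trans hmx
    exact (ENNReal.mul_le_mul_iff_left (volume_polarBody_pos hKcomp.isBounded)
      (volume_polarBody_lt_top h.zero_mem)).1 h1
  have hup : volume K ≤ volume (K ∩ {x | |⟪x, b'⟫| ≤ 1}) +
      2 * volume (tri z₂ (p - z₂) (y₂ - z₂)) := by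
    apply volume_upper
    have key : ∀ x ∈ K, 1 < ⟪x, b'⟫ → x ∈ tri z₂ (p - z₂) (y₂ - z₂) := by
      intro x hx hxb
      obtain ⟨i, j, k, hs, hx', hj, hk, hi⟩ := h.coords ht hx
      refine mem_tri ?_ hj hk hs hx'
      have := ht.y₂b'
      by_contra! hneg
      nlinarith
    intro x hx
    by_cases h1 : 1 < ⟪x, b'⟫
    · exact Or.inl (Or.inr (key x hx h1))
    by_cases h2 : 1 < ⟪-x, b'⟫
    · exact Or.inr (key _ (h.neg_mem_K hx) h2)
    · rw [inner_neg_left] at h2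
      have hab : |⟪x, b'⟫| ≤ 1 := abs_le.2 ⟨by linarith, by linarith⟩
      exact Or.inl (Or.inl ⟨hx, hab⟩)
  have hlow : volume (K ∩ {x | |⟪x, b'⟫| ≤ 1}) + 2 * volume (tri p (y₃ - p) (z₃ - p)) ≤
      volume L := by
    refine volume_lower (f := b) (measurableSet_tri hc0) ?_ ?_ ?_ ?_ hLneg
    · rintro x ⟨hx, -⟩
      have h1 := h.le_b _ (h.neg_mem_K hx)
      rw [inner_neg_left] at h1
      exact abs_le.2 ⟨by linarith, h.le_b _ hx⟩
    · rintro x ⟨i, j, hi, hj, hij, rfl⟩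
      simp only [inner_add_left, inner_sub_left, real_inner_smul_left, ht.pb, h.b₃]
      have := ht.z₃b
      nlinarith
    · rintro x ⟨hx, hxb⟩
      exact h.slab_subset ht hx hxb
    · exact tri_subset (convex_convexHull ℝ _) (z₃_mem z₂ z₃) (h.y₃_mem ht) (p_mem ht)
  have hfin : volume (K ∩ {x | |⟪x, b'⟫| ≤ 1}) ≠ ⊤ :=
    (hKcomp.isBounded.subset Set.inter_subset_left).measure_lt_top.ne
  have h1 := (hlow.trans hLK).trans hup
  rw [ENNReal.add_le_add_iff_left hfin,
    ENNReal.mul_le_mul_iff_right (by norm_num) (by norm_num), volume_tri, volume_tri,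
    ENNReal.mul_le_mul_iff_left stdTri_pos stdTri_fin] at h1
  exact (ENNReal.ofReal_le_ofReal_iff (abs_nonneg _)).1 h1

end EdgeConfig

/-! ### The explicit tilt and its limit -/

namespace EdgeConfig
variable {S : Finset E2} {K : Set E2} {y₁ y₂ y₃ y₄ m a b c : E2}

lemma cross_ne_zero (h : EdgeConfig S K y₁ y₂ y₃ y₄ m a b c) : cross (y₃ - y₂) (m - y₂) ≠ 0 := by
  intro h0
  apply h.ne₂₃
  have hM := h.mb
  have h2 := h.b₂
  have h3 := h.b₃
  rw [inner_coord] at h2 h3 hM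
  simp only [cross, PiLp.sub_apply] at h0
  have hD : m 0 * b 0 + m 1 * b 1 - 1 ≠ 0 := by linarith
  apply ext_coord
  · apply mul_left_cancel₀ hD
    linear_combination (-b 1) * h0 - (m 0 - y₂ 0) * (h3 - h2) + (y₂ 0 - y₃ 0) * h2
  · apply mul_left_cancel₀ hD
    linear_combination (b 0) * h0 - (m 1 - y₂ 1) * (h3 - h2) + (y₂ 1 - y₃ 1) * h2

/-- The comparison of `cross_le` for the explicit tilt `b' = b + t (a - c)` with small `t > 0`. The pivot
`p` divides the edge `y₂y₃` in the ratio `k₂ : k₃`, which is where `⟪·, a⟫ = ⟪·, c⟫`. -/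
lemma ineq_of_small (h : EdgeConfig S K y₁ y₂ y₃ y₄ m a b c)
    (hmax : ∀ (T : Finset E2) (L : Set E2), T.card ≤ S.card →
      L = convexHull ℝ (T : Set E2) → L = -L → (0 : E2) ∈ interior L →
      volume L * volume (polarBody L) ≤ volume K * volume (polarBody K))
    {t l k₂ k₃ D : ℝ} (hk₂ : k₂ = 1 - ⟪y₂, c⟫) (hk₃ : k₃ = 1 - ⟪y₃, a⟫) (hD : D = ⟪m, b⟫ - 1)
    (hl : 0 < l) (hy₁ : y₁ = y₂ + l • (y₂ - m)) (ht : 0 < t) (ht₂ : t * k₂ < D) (ht₃ : t * k₃ ≤ 2)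
    (htl : t * k₂ / (D - t * k₂) ≤ l)
    (hb : ∀ x ∈ S, x ≠ y₂ → x ≠ y₃ → ⟪x, b⟫ + t * ⟪x, a - c⟫ ≤ 1) :
    k₃ ^ 2 * (D - t * k₂) ≤ k₂ ^ 2 * (D + t * k₃) := by
  have hk₂0 : 0 < k₂ := by rw [hk₂]; linarith [h.c₂]
  have hk₃0 : 0 < k₃ := by rw [hk₃]; linarith [h.a₃]
  have hD0 : 0 < D := by rw [hD]; linarith [h.mb]
  have hc₂ : ⟪y₂, c⟫ = 1 - k₂ := by rw [hk₂]; ring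
  have ha₃ : ⟪y₃, a⟫ = 1 - k₃ := by rw [hk₃]; ring
  have hmb : ⟪m, b⟫ = 1 + D := by rw [hD]; ring
  have hE : 0 < D - t * k₂ := by linarith
  have hF : 0 < D + t * k₃ := by positivity
  set s := t * k₂ / (D - t * k₂) with hs
  set r := t * k₃ / (D + t * k₃) with hr
  have hs0 : 0 < s := by positivity
  have hr0 : 0 < r := by positivity
  have hr1 : r ≤ 1 := by rw [hr, div_le_one hF]; linarith
  have hse : s * (D - t * k₂) = t * k₂ := by rw [hs]; field_simp
  have hre : r * (D + t * k₃) = t * k₃ := by rw [hr]; field_simp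
  have hk : 0 < k₂ + k₃ := by positivity
  obtain ⟨l', hl', hy₄⟩ := h.symm.exists_ray
  set p : E2 := (k₃ / (k₂ + k₃)) • y₂ + (k₂ / (k₂ + k₃)) • y₃ with hp
  have hsum : k₃ / (k₂ + k₃) + k₂ / (k₂ + k₃) = 1 := by field_simp; ring
  have tilt : EdgeTilt S K y₂ y₃ y₄ m a b c (b + t • (a - c)) p (y₂ + s • (y₂ - m))
      (y₃ + r • (m - y₃)) := by
    refine
    { y₂b' := ?_, y₃b' := ?_, y₃b'_neg := ?_, z₂K := ?_, z₂a := ?_, z₂b' := ?_, z₂b := ?_,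
      pb := ?_, pb' := ?_, pa := ?_, z₃b' := ?_, z₃b := ?_, z₃m := ?_, pz := ?_, y₃z := ?_,
      b'_le := ?_, b'_eq := ⟨t, rfl⟩ }
    · simp only [inner_add_right, inner_sub_right, real_inner_smul_right, h.a₂, h.b₂, hc₂]
      nlinarith
    · simp only [inner_add_right, inner_sub_right, real_inner_smul_right, h.c₃, h.b₃, ha₃]
      nlinarith
    · simp only [inner_add_right, inner_sub_right, real_inner_smul_right, h.c₃, h.b₃, ha₃]
      nlinarith
    · refine h.convex_K.segment_subset (h.subset_K h.mem₁) (h.subset_K h.mem₂) ?_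
      refine ⟨s / l, 1 - s / l, by positivity, sub_nonneg.2 ((div_le_one hl).2 htl), by ring, ?_⟩
      have e : s = s / l * l := by field_simp
      rw [hy₁, smul_add, smul_smul, ← e]; module
    · simp only [inner_add_left, inner_sub_left, real_inner_smul_left, h.a₂, h.ma]; ring
    · simp only [inner_add_left, inner_sub_left, real_inner_smul_left, inner_add_right,
        inner_sub_right, real_inner_smul_right, h.a₂, h.ma, h.b₂, hc₂, hmb, h.mc]
      linear_combination -hse
    · simp only [inner_add_left, inner_sub_left, real_inner_smul_left, h.b₂, hmb]
      nlinarith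
    · rw [hp]; simp only [inner_add_left, real_inner_smul_left, h.b₂, h.b₃]; linarith
    · rw [hp]; simp only [inner_add_left, real_inner_smul_left, inner_add_right,
        inner_sub_right, real_inner_smul_right, h.b₂, h.b₃, h.a₂, h.c₃, ha₃, hc₂]
      field_simp; ring
    · rw [hp]; simp only [inner_add_left, real_inner_smul_left, h.a₂, ha₃]
      have : 0 < k₂ / (k₂ + k₃) * k₃ := by positivity
      linarith
    · simp only [inner_add_left, inner_sub_left, real_inner_smul_left, inner_add_right,
        inner_sub_right, real_inner_smul_right, h.c₃, h.ma, h.b₃, ha₃, hmb, h.mc]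
      linear_combination hre
    · simp only [inner_add_left, inner_sub_left, real_inner_smul_left, h.b₃, hmb]
      nlinarith
    · exact ⟨1 - r, r, by linarith, hr0.le, by ring, by module⟩
    · refine ⟨k₃ * (D - t * k₂) / ((k₂ + k₃) * D), k₂ * (D + t * k₃) / ((k₂ + k₃) * D),
        by positivity, by positivity, by field_simp; ring, ?_⟩
      have e1 : k₃ * (D - t * k₂) / ((k₂ + k₃) * D) * s = t * k₂ * k₃ / ((k₂ + k₃) * D) := by
        rw [hs]; field_simp
      have e2 : k₂ * (D + t * k₃) / ((k₂ + k₃) * D) * r = t * k₂ * k₃ / ((k₂ + k₃) * D) := by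
        rw [hr]; field_simp
      rw [smul_add, smul_add, smul_smul, smul_smul, e1, e2, hp]
      have e3 : k₃ / (k₂ + k₃) = k₃ * (D - t * k₂) / ((k₂ + k₃) * D) +
          t * k₂ * k₃ / ((k₂ + k₃) * D) := by field_simp; ring
      have e4 : k₂ / (k₂ + k₃) = k₂ * (D + t * k₃) / ((k₂ + k₃) * D) -
          t * k₂ * k₃ / ((k₂ + k₃) * D) := by field_simp; ring
      rw [e3, e4]; module
    · refine ⟨r / (r + l'), l' / (r + l'), by positivity, by positivity, by field_simp, ?_⟩
      rw [hy₄]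
      have e : l' / (r + l') = 1 - r / (r + l') := by field_simp; ring
      have e' : r / (r + l') * l' = l' / (r + l') * r := by field_simp
      rw [smul_add, smul_add, smul_smul, smul_smul, e', e]; module
    · intro x hx h2 _ h3 _
      rw [inner_add_right, real_inner_smul_right]
      exact hb x hx h2 h3
  have hcr := h.cross_le tilt hmax
  have hX := h.cross_ne_zero
  have e1 : cross (y₃ - p) (y₃ + r • (m - y₃) - p) =
      k₃ / (k₂ + k₃) * r * cross (y₃ - y₂) (m - y₂) := by
    have : y₃ - p = (k₃ / (k₂ + k₃)) • (y₃ - y₂) := by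
      have e : k₂ / (k₂ + k₃) = 1 - k₃ / (k₂ + k₃) := by linarith
      rw [hp, e]; module
    have e' : y₃ + r • (m - y₃) - p = (y₃ - p) + r • (m - y₃) := by module
    rw [e', this]
    simp only [cross, PiLp.sub_apply, PiLp.add_apply, PiLp.smul_apply, smul_eq_mul]; ring
  have e2 : cross (p - (y₂ + s • (y₂ - m))) (y₂ - (y₂ + s • (y₂ - m))) =
      k₂ / (k₂ + k₃) * s * cross (y₃ - y₂) (m - y₂) := by
    have : p = y₂ + (k₂ / (k₂ + k₃)) • (y₃ - y₂) := by
      have e : k₃ / (k₂ + k₃) = 1 - k₂ / (k₂ + k₃) := by linarith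
      rw [hp, e]; module
    rw [this]
    simp only [cross, PiLp.sub_apply, PiLp.add_apply, PiLp.smul_apply, smul_eq_mul]; ring
  rw [e1, e2, abs_mul (k₃ / (k₂ + k₃) * r), abs_mul (k₂ / (k₂ + k₃) * s),
    abs_of_pos (by positivity : 0 < k₃ / (k₂ + k₃) * r),
    abs_of_pos (by positivity : 0 < k₂ / (k₂ + k₃) * s)] at hcr
  have h1 := le_of_mul_le_mul_right hcr (abs_pos.2 hX)
  rw [hs, hr, div_mul_div_comm, div_mul_div_comm, div_le_div_iff₀ (by positivity) (by positivity)] at h1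
  have h2 : (t * (k₂ + k₃)) * (k₃ ^ 2 * (D - t * k₂)) ≤ (t * (k₂ + k₃)) * (k₂ ^ 2 * (D + t * k₃)) := by
    linarith
  exact le_of_mul_le_mul_left h2 (by positivity)

/-- The limit of `ineq_of_small` as `t` tends to `0` from the right. -/
lemma sq_le (h : EdgeConfig S K y₁ y₂ y₃ y₄ m a b c)
    (hmax : ∀ (T : Finset E2) (L : Set E2), T.card ≤ S.card →
      L = convexHull ℝ (T : Set E2) → L = -L → (0 : E2) ∈ interior L →
      volume L * volume (polarBody L) ≤ volume K * volume (polarBody K)) :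
    (1 - ⟪y₃, a⟫) ^ 2 ≤ (1 - ⟪y₂, c⟫) ^ 2 := by
  obtain ⟨k₂, hk₂⟩ : ∃ k₂, k₂ = 1 - ⟪y₂, c⟫ := ⟨_, rfl⟩
  obtain ⟨k₃, hk₃⟩ : ∃ k₃, k₃ = 1 - ⟪y₃, a⟫ := ⟨_, rfl⟩
  obtain ⟨D, hD⟩ : ∃ D, D = ⟪m, b⟫ - 1 := ⟨_, rfl⟩
  have hD0 : 0 < D := by rw [hD]; linarith [h.mb]
  obtain ⟨l, hl, hy₁⟩ := h.exists_ray
  have lim : ∀ {f : ℝ → ℝ}, ContinuousAt f 0 →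
      Filter.Tendsto f (nhdsWithin 0 (Set.Ioi 0)) (nhds (f 0)) :=
    fun hf => hf.tendsto.mono_left nhdsWithin_le_nhds
  have ev1 : ∀ᶠ t : ℝ in nhdsWithin 0 (Set.Ioi 0), t * k₂ < D :=
    (lim (f := fun t => t * k₂) (by fun_prop)).eventually_lt_const (by simpa using hD0)
  have ev2 : ∀ᶠ t : ℝ in nhdsWithin 0 (Set.Ioi 0), t * k₃ < 2 :=
    (lim (f := fun t => t * k₃) (by fun_prop)).eventually_lt_const (by simp)
  have ev3 : ∀ᶠ t : ℝ in nhdsWithin 0 (Set.Ioi 0), t * k₂ / (D - t * k₂) < l :=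
    (lim (f := fun t => t * k₂ / (D - t * k₂))
      (by apply ContinuousAt.div <;> [fun_prop; fun_prop; simpa using hD0.ne'])).eventually_lt_const
      (by simpa using hl)
  have ev4 : ∀ᶠ t : ℝ in nhdsWithin 0 (Set.Ioi 0),
      ∀ x ∈ S, x ≠ y₂ → x ≠ y₃ → ⟪x, b⟫ + t * ⟪x, a - c⟫ ≤ 1 := by
    rw [Filter.eventually_all_finset]
    intro x hx
    by_cases h2 : x = y₂
    · exact Filter.Eventually.of_forall fun t h' => absurd h2 h'
    by_cases h3 : x = y₃
    · exact Filter.Eventually.of_forall fun t _ h' => absurd h3 h'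
    filter_upwards [(lim (f := fun t => ⟪x, b⟫ + t * ⟪x, a - c⟫) (by fun_prop)).eventually_lt_const
      (u := 1) (by simpa using h.b_lt x hx h2 h3)] with t ht _ _ using ht.le
  have ev : ∀ᶠ t : ℝ in nhdsWithin 0 (Set.Ioi 0),
      k₃ ^ 2 * (D - t * k₂) ≤ k₂ ^ 2 * (D + t * k₃) := by
    filter_upwards [ev1, ev2, ev3, ev4, self_mem_nhdsWithin] with t h1 h2 h3 h4 h5
    exact h.ineq_of_small hmax hk₂ hk₃ hD hl hy₁ h5 h1 h2.le h3.le h4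
  have hlim := le_of_tendsto_of_tendsto (lim (f := fun t => k₃ ^ 2 * (D - t * k₂)) (by fun_prop))
    (lim (f := fun t => k₂ ^ 2 * (D + t * k₃)) (by fun_prop)) ev
  simp only [zero_mul, sub_zero, add_zero] at hlim
  rw [← hk₂, ← hk₃]
  exact le_of_mul_le_mul_right hlim hD0

end EdgeConfig

/-! ### Supporting lines and the vertices of a symmetric polygon -/

/-- The line of an edge is a supporting line: a functional separating the midpoint of the edge from the
interior of `K` is constant on the edge. -/
lemma exists_support {K : Set E2} (hK : Convex ℝ K) (h0 : (0 : E2) ∈ interior K) {y y' : E2}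
    (hy : y ∈ K) (hy' : y' ∈ K) (hf : segment ℝ y y' ⊆ frontier K) :
    ∃ f : E2, (∀ x ∈ K, ⟪x, f⟫ ≤ 1) ∧ ⟪y, f⟫ = 1 ∧ ⟪y', f⟫ = 1 := by
  have hmid : midpoint ℝ y y' ∉ interior K := (hf (midpoint_mem_segment y y')).2
  obtain ⟨g, hg⟩ := geometric_hahn_banach_open_point hK.interior isOpen_interior hmid
  have hpos : 0 < g (midpoint ℝ y y') := by simpa using hg 0 h0
  set M := g (midpoint ℝ y y') with hM
  have hle : ∀ x ∈ K, g x ≤ M := by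
    intro x hx
    have hx' : x ∈ closure (interior K) := by
      rw [hK.closure_interior_eq_closure_of_nonempty_interior ⟨0, h0⟩]
      exact subset_closure hx
    exact closure_minimal (t := {x | g x ≤ M}) (fun z hz => (hg z hz).le)
      (isClosed_le g.continuous continuous_const) hx'
  have hmid' : g y + g y' = 2 * M := by
    rw [hM, midpoint_eq_smul_add, map_smul, map_add]; simp
  have h1 := hle y hy
  have h2 := hle y' hy'
  have hin : ∀ x, ⟪x, M⁻¹ • (InnerProductSpace.toDual ℝ E2).symm g⟫ = g x / M := by
    intro x
    rw [real_inner_smul_right, real_inner_comm, InnerProductSpace.toDual_symm_apply]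
    field_simp
  refine ⟨M⁻¹ • (InnerProductSpace.toDual ℝ E2).symm g, ?_, ?_, ?_⟩
  · intro x hx
    rw [hin, div_le_one hpos]; exact hle x hx
  · rw [hin, div_eq_one_iff_eq (ne_of_gt hpos)]; linarith
  · rw [hin, div_eq_one_iff_eq (ne_of_gt hpos)]; linarith

/-- Of three collinear points one is between the others, so it is not extreme. -/
lemma not_three_on_line {K : Set E2} {f x y z : E2} (hx : x ∈ K.extremePoints ℝ)
    (hy : y ∈ K.extremePoints ℝ) (hz : z ∈ K.extremePoints ℝ) (hxy : x ≠ y) (hxz : x ≠ z)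
    (hyz : y ≠ z) (fx : ⟪x, f⟫ = 1) (fy : ⟪y, f⟫ = 1) : ⟪z, f⟫ ≠ 1 := by
  intro fz
  have hf : f ≠ 0 := by rintro rfl; simp at fx
  have hcol := collinear_of_level hf (fx.trans fy.symm) (fx.trans fz.symm)
  rw [mem_extremePoints_iff_forall_segment] at hx hy hz
  rcases hcol.wbtw_or_wbtw_or_wbtw with h | h | h
  · rcases hy.2 x hx.1 z hz.1 h.mem_segment with h | h
    exacts [hxy h, hyz h.symm]
  · rcases hz.2 y hy.1 x hx.1 h.mem_segment with h | h
    exacts [hyz h, hxz h]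
  · rcases hx.2 z hz.1 y hy.1 h.mem_segment with h | h
    exacts [hxz h.symm, hxy h.symm]

lemma neg_mem_extremePoints {K : Set E2} (hK : K = -K) {x : E2} (hx : x ∈ K.extremePoints ℝ) :
    -x ∈ K.extremePoints ℝ := by
  have hneg : ∀ z ∈ K, -z ∈ K := fun z hz => by rw [hK]; simpa using hz
  rw [mem_extremePoints_iff_forall_segment] at hx ⊢
  refine ⟨hneg _ hx.1, fun u hu v hv ⟨i, j, hi, hj, hij, e⟩ => ?_⟩
  rcases hx.2 (-u) (hneg u hu) (-v) (hneg v hv) ⟨i, j, hi, hj, hij, by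
    rw [smul_neg, smul_neg, ← neg_add, e, neg_neg]⟩ with h | h
  · left; rw [← h, neg_neg]
  · right; rw [← h, neg_neg]

/-- If `y, z` span an edge on `⟪·, b⟫ = 1` and `y, -z` an edge on `⟪·, f⟫ = 1`, then `K` is the
parallelogram with vertices `±y`, `±z`. -/
lemma card_le_four {S : Finset E2} {K : Set E2} {y z b f : E2} (hKc : Convex ℝ K) (hsym : K = -K)
    (hvert : (S : Set E2) = K.extremePoints ℝ) (hy : y ∈ K) (hz : z ∈ K)
    (leb : ∀ x ∈ K, ⟪x, b⟫ ≤ 1) (lef : ∀ x ∈ K, ⟪x, f⟫ ≤ 1)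
    (yb : ⟪y, b⟫ = 1) (zb : ⟪z, b⟫ = 1) (yf : ⟪y, f⟫ = 1) (zf : ⟪z, f⟫ = -1) : S.card ≤ 4 := by
  classical
  have hneg : ∀ z ∈ K, -z ∈ K := fun z hz => by rw [hsym]; simpa using hz
  have hcr : cross f b ≠ 0 := by
    intro h0
    have e : ⟪y, f⟫ * ⟪z, b⟫ - ⟪y, b⟫ * ⟪z, f⟫ = cross y z * cross f b := by
      simp only [inner_coord, cross]; ring
    rw [h0, yb, zb, yf, zf] at e
    norm_num at e
  have hdec : ∀ x : E2, x = ((⟪x, b⟫ + ⟪x, f⟫) / 2) • y + ((⟪x, b⟫ - ⟪x, f⟫) / 2) • z := by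
    intro x
    set w := x - (((⟪x, b⟫ + ⟪x, f⟫) / 2) • y + ((⟪x, b⟫ - ⟪x, f⟫) / 2) • z) with hw
    have wb : ⟪w, b⟫ = 0 := by
      rw [hw]; simp only [inner_sub_left, inner_add_left, real_inner_smul_left, yb, zb]; ring
    have wf : ⟪w, f⟫ = 0 := by
      rw [hw]; simp only [inner_sub_left, inner_add_left, real_inner_smul_left, yf, zf]; ring
    have : w = 0 := by
      rw [inner_coord] at wb wf
      apply ext_coord
      · apply mul_left_cancel₀ hcr
        simp only [cross, PiLp.zero_apply]
        linear_combination b 1 * wf - f 1 * wb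
      · apply mul_left_cancel₀ hcr
        simp only [cross, PiLp.zero_apply]
        linear_combination f 0 * wb - b 0 * wf
    rw [hw] at this
    exact sub_eq_zero.1 this
  have hKe : K = convexHull ℝ (({y, z, -z, -y} : Finset E2) : Set E2) := by
    apply Set.Subset.antisymm
    · intro x hx
      have hB := leb x hx
      have hF := lef x hx
      have hB' := leb _ (hneg x hx)
      have hF' := lef _ (hneg x hx)
      rw [inner_neg_left] at hB' hF'
      rw [hdec x]
      set B := ⟪x, b⟫
      set F := ⟪x, f⟫
      have hm : ∀ k, (![y, z, -z, -y] : Fin 4 → E2) k ∈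
          convexHull ℝ (({y, z, -z, -y} : Finset E2) : Set E2) := by
        intro k
        apply subset_convexHull
        fin_cases k <;> simp
      have := (convex_convexHull ℝ (({y, z, -z, -y} : Finset E2) : Set E2)).sum_mem
        (t := Finset.univ) (z := ![y, z, -z, -y])
        (w := ![(1 + B) * (1 + F) / 4, (1 + B) * (1 - F) / 4, (1 - B) * (1 + F) / 4,
          (1 - B) * (1 - F) / 4]) ?_ ?_ (fun k _ => hm k)
      · simp only [Fin.sum_univ_four, Matrix.cons_val] at this
        convert this using 1
        module
      · have h1 : 0 ≤ 1 + B := by linarith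
        have h2 : 0 ≤ 1 - B := by linarith
        have h3 : 0 ≤ 1 + F := by linarith
        have h4 : 0 ≤ 1 - F := by linarith
        intro k _
        fin_cases k <;> simp <;> positivity
      · simp only [Fin.sum_univ_four, Matrix.cons_val]; ring
    · apply convexHull_min _ hKc
      intro x hx
      simp only [Finset.coe_insert, Finset.coe_singleton, Set.mem_insert_iff,
        Set.mem_singleton_iff] at hx
      rcases hx with rfl | rfl | rfl | rfl
      exacts [hy, hz, hneg _ hz, hneg _ hy]
  have hsub : S ⊆ ({y, z, -z, -y} : Finset E2) := by
    rw [← Finset.coe_subset, hvert]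
    conv_lhs => rw [hKe]
    exact extremePoints_convexHull_subset
  exact (Finset.card_le_card hsub).trans Finset.card_le_four

lemma inner_of_mem_line {x y z f : E2} (hx : x ∈ (affineSpan ℝ ({y, z} : Set E2) : Set E2))
    (hy : ⟪y, f⟫ = 1) (hz : ⟪z, f⟫ = 1) : ⟪x, f⟫ = 1 := by
  obtain ⟨r, rfl⟩ := mem_affineSpan_pair_iff_exists_lineMap_eq.1 hx
  rw [AffineMap.lineMap_apply]
  simp [inner_add_left, inner_sub_left, real_inner_smul_left, hy, hz]

/-- Property (ii) of a maximizer of the volume product among o-symmetric n-gons: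
for consecutive vertices y₁, y₂, y₃, y₄, if m is the intersection of the lines
through y₁,y₂ and through y₃,y₄, then o, (y₂+y₃)/2, m are collinear. -/
theorem maximizer_consecutive_edges_intersection_collinear
    (n : ℕ) (hn6 : 6 ≤ n) (hneven : Even n)
    (S : Finset E2) (hScard : S.card = n)
    (K : Set E2) (hK : K = convexHull ℝ (S : Set E2))
    (hvert : (S : Set E2) = K.extremePoints ℝ)
    (hsym : K = -K) (h0 : (0 : E2) ∈ interior K)
    (hmax : ∀ (T : Finset E2) (L : Set E2), T.card ≤ n →
      L = convexHull ℝ (T : Set E2) → L = -L → (0 : E2) ∈ interior L →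
      volume L * volume (polarBody L) ≤ volume K * volume (polarBody K))
    (y₁ y₂ y₃ y₄ : E2)
    (hy₁ : y₁ ∈ K.extremePoints ℝ) (hy₂ : y₂ ∈ K.extremePoints ℝ)
    (hy₃ : y₃ ∈ K.extremePoints ℝ) (hy₄ : y₄ ∈ K.extremePoints ℝ)
    (hdist : [y₁, y₂, y₃, y₄].Pairwise (· ≠ ·))
    (hedge12 : segment ℝ y₁ y₂ ⊆ frontier K)
    (hedge23 : segment ℝ y₂ y₃ ⊆ frontier K)
    (hedge34 : segment ℝ y₃ y₄ ⊆ frontier K)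
    (m : E2)
    (hm12 : m ∈ (affineSpan ℝ ({y₁, y₂} : Set E2) : Set E2))
    (hm34 : m ∈ (affineSpan ℝ ({y₃, y₄} : Set E2) : Set E2)) :
    Collinear ℝ {(0 : E2), (2 : ℝ)⁻¹ • (y₂ + y₃), m} := by
  subst hScard
  have hKc : Convex ℝ K := by rw [hK]; exact convex_convexHull _ _
  simp only [List.pairwise_cons, List.mem_cons, List.not_mem_nil, or_false, forall_eq_or_imp,
    forall_eq, IsEmpty.forall_iff, implies_true, List.Pairwise.nil, and_true] at hdist
  obtain ⟨⟨n12, n13, n14⟩, ⟨n23, n24⟩, n34⟩ := hdist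
  have memS : ∀ {x}, x ∈ K.extremePoints ℝ → x ∈ S := fun {x} hx => by
    rw [← hvert] at hx; exact hx
  have hneg : ∀ z ∈ K, -z ∈ K := fun z hz => by rw [hsym]; simpa using hz
  obtain ⟨a, lea, a1, a2⟩ := exists_support hKc h0 hy₁.1 hy₂.1 hedge12
  obtain ⟨b, leb, b2, b3⟩ := exists_support hKc h0 hy₂.1 hy₃.1 hedge23
  obtain ⟨c, lec, c3, c4⟩ := exists_support hKc h0 hy₃.1 hy₄.1 hedge34
  have ma := inner_of_mem_line hm12 a1 a2
  have mc := inner_of_mem_line hm34 c3 c4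
  have a3 : ⟪y₃, a⟫ < 1 := lt_of_le_of_ne (lea _ hy₃.1)
    (not_three_on_line hy₁ hy₂ hy₃ n12 n13 n23 a1 a2)
  have c2 : ⟪y₂, c⟫ < 1 := lt_of_le_of_ne (lec _ hy₂.1)
    (not_three_on_line hy₃ hy₄ hy₂ n34 n23.symm n24.symm c3 c4)
  have a3' := lea _ (hneg _ hy₃.1)
  have c2' := lec _ (hneg _ hy₂.1)
  rw [inner_neg_left] at a3' c2'
  have mb : 1 < ⟪m, b⟫ := by
    -- the `3 × 3` matrix of pairings of `y₂, y₃, m` with `a, b, c` has rank at most two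
    have hdet : ⟪y₂, a⟫ * (⟪y₃, b⟫ * ⟪m, c⟫ - ⟪y₃, c⟫ * ⟪m, b⟫)
        - ⟪y₂, b⟫ * (⟪y₃, a⟫ * ⟪m, c⟫ - ⟪y₃, c⟫ * ⟪m, a⟫)
        + ⟪y₂, c⟫ * (⟪y₃, a⟫ * ⟪m, b⟫ - ⟪y₃, b⟫ * ⟪m, a⟫) = 0 := by
      simp only [inner_coord]; ring
    rw [a2, b2, b3, c3, ma, mc] at hdet
    have h1 : (⟪m, b⟫ - 1) * (1 - ⟪y₂, c⟫ * ⟪y₃, a⟫) = (1 - ⟪y₂, c⟫) * (1 - ⟪y₃, a⟫) := by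
      linear_combination -hdet
    have h2 : 0 < (1 - ⟪y₂, c⟫) * (1 - ⟪y₃, a⟫) := mul_pos (by linarith) (by linarith)
    have h3 : 0 ≤ 1 - ⟪y₂, c⟫ * ⟪y₃, a⟫ := by nlinarith
    rw [← h1] at h2
    linarith [pos_of_mul_pos_left h2 h3]
  have cfg : EdgeConfig S K y₁ y₂ y₃ y₄ m a b c :=
    { hull := hK
      neg_mem := fun x hx => memS (neg_mem_extremePoints hsym (by rw [← hvert]; exact hx))
      zero_mem := h0
      mem₁ := memS hy₁
      mem₂ := memS hy₂
      mem₃ := memS hy₃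
      mem₄ := memS hy₄
      le_a := lea
      le_b := leb
      le_c := lec
      a₁ := a1
      a₂ := a2
      b₂ := b2
      b₃ := b3
      c₃ := c3
      c₄ := c4
      a₃ := a3
      c₂ := c2
      b_lt := fun x hx h2 h3 => by
        have hx' : x ∈ K.extremePoints ℝ := by rw [← hvert]; exact hx
        exact lt_of_le_of_ne (leb _ hx'.1)
          (not_three_on_line hy₂ hy₃ hx' n23 h2.symm h3.symm b2 b3)
      ne₁₂ := n12
      ne₁₃ := n13
      ne₂₃ := n23
      ne₂₄ := n24
      ne₃₄ := n34
      ma := ma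
      mc := mc
      mb := mb
      ne₁₃' := fun e => by
        rw [e, inner_neg_left] at a1
        have := card_le_four hKc hsym hvert hy₂.1 hy₃.1 leb lea b2 b3 a2 (by linarith)
        omega
      ne₄₂' := fun e => by
        rw [e, inner_neg_left] at c4
        have := card_le_four hKc hsym hvert hy₃.1 hy₂.1 leb lec b3 b2 c3 (by linarith)
        omega }
  have e1 := cfg.sq_le hmax
  have e2 := cfg.symm.sq_le hmax
  have hk : ⟪y₃, a⟫ = ⟪y₂, c⟫ := by
    have h1 := abs_le_of_sq_le_sq e1 (by linarith)
    have h2 := abs_le_of_sq_le_sq e2 (by linarith)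
    linarith [(abs_le.1 h1).2, (abs_le.1 h2).2]
  have hac : a - c ≠ 0 := by
    intro e
    rw [sub_eq_zero.1 e] at a3
    linarith
  refine collinear_of_level hac ?_ ?_
  · simp only [inner_zero_left, real_inner_smul_left, inner_add_left, inner_sub_right, a2, c3, hk]
    ring
  · simp only [inner_zero_left, inner_sub_right, ma, mc]; ring
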